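/- Under the hypotheses (H1)–(H3) on the pressure P, with k(ρ) = ∫₀^ρ √(P'(y))/y dy, λ₁ = (3−γ₁)/(2(γ₁−1)), M_{λ₁} = (2λ₁ (2λ₁+1)^{−1/2} ∫_{−1}^{1} (1−z²)^{λ₁} dz)^{−1}, a₁(ρ) = M_{λ₁} k(ρ)^{−λ₁} k'(ρ)^{−1/2}, b₁(ρ) = M_{λ₁} ρ k(ρ)^{−λ₁−1} k'(ρ)^{1/2}, and b₂(ρ) = −(4(λ₁+1))^{−1} ρ k'(ρ)^{1/2} k(ρ)^{−(λ₁+2)} ∫₀^ρ k(s)^{λ₁} k'(s)^{−1/2} a₁''(s) ds − (4(λ₁+1))^{−1} k(ρ)^{−(λ₁+2)} k'(ρ)^{−1/2} ∫₀^ρ k(s)^{λ₁+1} k'(s)^{−1/2} b₁''(s) ds + (4(λ₁+1))^{−1} k(ρ)^{−(λ₁+2)} k'(ρ)^{−1/2} ∫₀^ρ s k(s)^{λ₁} k'(s)^{1/2} a₁''(s) ds (all three integrals converge), the following holds: b₁(ρ) > 0 for every ρ > 0, and there exist a constant C > 0 and a threshold ρ̄ ≥ ρ^* such that, with θ₁ =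 (γ₁−1)/2 and θ₂ = (γ₂−1)/2, for all ρ ≥ ρ̄: |b₁(ρ)| + ρ|b₁'(ρ)| + ρ²|b₁''(ρ)| ≤ C ρ^{1/2 − θ₂/(2θ₁)} and |b₂(ρ)| + ρ|b₂'(ρ)| + ρ²|b₂''(ρ)| ≤ C ρ^{1/2 − θ₂(1 + 1/(2θ₁))}. -/

import Mathlib

open Set MeasureTheory Filter

/-- Symbol class: `n` derivatives with `f^(j) = O(x^(α-j))` on `s`. -/
def SymC (s : Set ℝ) : ℕ → ℝ → (ℝ → ℝ) → Prop
  | 0, α, f => ∃ C : ℝ, ∀ x ∈ s, |f x| ≤ C * x ^ α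
  | n+1, α, f => DifferentiableOn ℝ f s ∧ (∃ C : ℝ, ∀ x ∈ s, |f x| ≤ C * x ^ α) ∧
      SymC s n (α - 1) (deriv f)

lemma SymC.bound {s : Set ℝ} {n : ℕ} {α : ℝ} {f : ℝ → ℝ} (h : SymC s n α f) (hp : s ⊆ Ioi 0) :
    ∃ C : ℝ, 0 < C ∧ ∀ x ∈ s, |f x| ≤ C * x ^ α := by
  have : ∃ C : ℝ, ∀ x ∈ s, |f x| ≤ C * x ^ α := by
    cases n with
    | zero => exact h
    | succ n => exact h.2.1
  obtain ⟨C, hC⟩ := this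
  refine ⟨|C| + 1, by positivity, fun x hx => (hC x hx).trans ?_⟩
  have h0 : (0:ℝ) < x := hp hx
  have := le_abs_self C
  gcongr
  linarith

lemma SymC.congr {s : Set ℝ} (hs : IsOpen s) {n : ℕ} {α : ℝ} {f g : ℝ → ℝ} (h : SymC s n α f)
    (hfg : EqOn f g s) : SymC s n α g := by
  induction n generalizing α f g with
  | zero =>
    obtain ⟨C, hC⟩ := h
    exact ⟨C, fun x hx => by rw [← hfg hx]; exact hC x hx⟩
  | succ n ih =>
    obtain ⟨h1, ⟨C, hC⟩, h3⟩ := h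
    refine ⟨h1.congr (fun x hx => (hfg hx).symm),
      ⟨C, fun x hx => by rw [← hfg hx]; exact hC x hx⟩, ih h3 ?_⟩
    intro x hx
    exact (hfg.eventuallyEq_of_mem (hs.mem_nhds hx)).deriv_eq

lemma SymC.pred {s : Set ℝ} {n : ℕ} {α : ℝ} {f : ℝ → ℝ} (h : SymC s (n+1) α f) :
    SymC s n α f := by
  induction n generalizing α f with
  | zero => exact h.2.1
  | succ n ih => exact ⟨h.1, h.2.1, ih h.2.2⟩

lemma SymC.add {s : Set ℝ} (hs : IsOpen s) {n : ℕ} {α : ℝ} {f g : ℝ → ℝ}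
    (hf : SymC s n α f) (hg : SymC s n α g) : SymC s n α (fun x => f x + g x) := by
  induction n generalizing α f g with
  | zero =>
    obtain ⟨C, hC⟩ := hf
    obtain ⟨D, hD⟩ := hg
    refine ⟨C + D, fun x hx => (abs_add_le _ _).trans ?_⟩
    linarith [hC x hx, hD x hx]
  | succ n ih =>
    obtain ⟨h1, ⟨C, hC⟩, h3⟩ := hf
    obtain ⟨k1, ⟨D, hD⟩, k3⟩ := hg
    refine ⟨h1.add k1, ⟨C + D, fun x hx => (abs_add_le _ _).trans ?_⟩, ?_⟩
    · linarith [hC x hx, hD x hx]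
    · refine (ih h3 k3).congr hs ?_
      intro x hx
      exact (deriv_fun_add (h1.differentiableAt (hs.mem_nhds hx))
        (k1.differentiableAt (hs.mem_nhds hx))).symm

lemma SymC.mul {s : Set ℝ} (hs : IsOpen s) (hp : s ⊆ Ioi 0) {n : ℕ} {α β γ : ℝ} {f g : ℝ → ℝ}
    (hf : SymC s n α f) (hg : SymC s n β g) (hγ : α + β = γ) : SymC s n γ (fun x => f x * g x) := by
  have key : ∀ {n : ℕ} {α β γ : ℝ} {f g : ℝ → ℝ}, SymC s n α f → SymC s n β g → α + β = γ →
      ∃ C : ℝ, ∀ x ∈ s, |f x * g x| ≤ C * x ^ γ := by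
    intro n α β γ f g hf hg hγ
    obtain ⟨C, hC0, hC⟩ := hf.bound hp
    obtain ⟨D, hD0, hD⟩ := hg.bound hp
    refine ⟨C * D, fun x hx => ?_⟩
    have h0 : (0:ℝ) < x := hp hx
    rw [abs_mul, ← hγ, Real.rpow_add h0]
    calc |f x| * |g x| ≤ (C * x ^ α) * (D * x ^ β) := by
          gcongr
          · exact hC x hx
          · exact hD x hx
      _ = _ := by ring
  induction n generalizing α β γ f g with
  | zero => exact key hf hg hγ
  | succ n ih =>
    refine ⟨hf.1.mul hg.1, key hf hg hγ, ?_⟩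
    have e1 := ih hf.2.2 hg.pred (γ := γ - 1) (by linarith)
    have e2 := ih hf.pred hg.2.2 (γ := γ - 1) (by linarith)
    refine (e1.add hs e2).congr hs ?_
    intro x hx
    exact (deriv_fun_mul (hf.1.differentiableAt (hs.mem_nhds hx))
        (hg.1.differentiableAt (hs.mem_nhds hx))).symm

lemma SymC.zero {s : Set ℝ} (n : ℕ) (α : ℝ) : SymC s n α (fun _ => 0) := by
  induction n generalizing α with
  | zero => exact ⟨0, by simp⟩
  | succ n ih =>
    refine ⟨differentiableOn_const _, ⟨0, by simp⟩, ?_⟩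
    have : deriv (fun _ : ℝ => (0:ℝ)) = fun _ => 0 := by ext x; simp
    rw [this]; exact ih _

lemma SymC.const {s : Set ℝ} (n : ℕ) (c : ℝ) : SymC s n 0 (fun _ => c) := by
  cases n with
  | zero => exact ⟨|c|, by simp⟩
  | succ n =>
    refine ⟨differentiableOn_const _, ⟨|c|, by simp⟩, ?_⟩
    have : deriv (fun _ : ℝ => c) = fun _ => 0 := by ext x; simp
    rw [this]; exact SymC.zero _ _

lemma SymC.const_mul {s : Set ℝ} (hs : IsOpen s) (hp : s ⊆ Ioi 0) {n : ℕ} {α : ℝ} {f : ℝ → ℝ}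
    (c : ℝ) (hf : SymC s n α f) : SymC s n α (fun x => c * f x) :=
  (SymC.const n c).mul hs hp hf (by ring)

lemma SymC.id_rpow {s : Set ℝ} (hs : IsOpen s) (hp : s ⊆ Ioi 0) (n : ℕ) (α : ℝ) :
    SymC s n α (fun x => x ^ α) := by
  have b : ∀ α : ℝ, ∃ C : ℝ, ∀ x ∈ s, |x ^ α| ≤ C * x ^ α := by
    intro α
    refine ⟨1, fun x hx => ?_⟩
    have h0 : (0:ℝ) < x := hp hx
    rw [abs_of_pos (by positivity), one_mul]
  induction n generalizing α with
  | zero => exact b α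
  | succ n ih =>
    refine ⟨fun x hx => (Real.differentiableAt_rpow_const_of_ne α
      (ne_of_gt (hp hx))).differentiableWithinAt, b α, ?_⟩
    refine ((ih (α - 1)).const_mul hs hp α).congr hs ?_
    intro x hx
    exact ((Real.hasDerivAt_rpow_const (Or.inl (ne_of_gt (hp hx)))).deriv).symm

lemma SymC.id {s : Set ℝ} (hs : IsOpen s) (hp : s ⊆ Ioi 0) (n : ℕ) :
    SymC s n 1 (fun x => x) :=
  (SymC.id_rpow hs hp n 1).congr hs (fun x _ => by simp)

lemma SymC.rpow {s : Set ℝ} (hs : IsOpen s) (hp : s ⊆ Ioi 0) {n : ℕ} {α c γ : ℝ} {f : ℝ → ℝ}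
    (hf : SymC s n α f) (hc : 0 < c) (hl : ∀ x ∈ s, c * x ^ α ≤ f x) (p : ℝ) (hγ : α * p = γ) :
    SymC s n γ (fun x => f x ^ p) := by
  have fpos : ∀ x ∈ s, 0 < f x := fun x hx =>
    lt_of_lt_of_le (mul_pos hc (Real.rpow_pos_of_pos (hp hx) _)) (hl x hx)
  have b : ∀ p : ℝ, ∃ C : ℝ, ∀ x ∈ s, |f x ^ p| ≤ C * x ^ (α * p) := by
    intro p
    obtain ⟨C, hC0, hC⟩ := hf.bound hp
    rcases le_total 0 p with h | h
    · refine ⟨C ^ p, fun x hx => ?_⟩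
      have h0 : (0:ℝ) < x := hp hx
      have h1 := fpos x hx
      rw [abs_of_pos (by positivity), Real.rpow_mul h0.le, ← Real.mul_rpow hC0.le (by positivity)]
      exact Real.rpow_le_rpow h1.le ((le_abs_self _).trans (hC x hx)) h
    · refine ⟨c ^ p, fun x hx => ?_⟩
      have h0 : (0:ℝ) < x := hp hx
      have h1 := fpos x hx
      rw [abs_of_pos (by positivity), Real.rpow_mul h0.le, ← Real.mul_rpow hc.le (by positivity)]
      exact Real.rpow_le_rpow_of_nonpos (by positivity) (hl x hx) h
  induction n generalizing p γ with
  | zero => subst hγ; exact b p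
  | succ n ih =>
    have hd : ∀ x ∈ s, HasDerivAt (fun x => f x ^ p) (deriv f x * p * f x ^ (p - 1)) x := by
      intro x hx
      exact (hf.1.differentiableAt (hs.mem_nhds hx)).hasDerivAt.rpow_const
        (Or.inl (fpos x hx).ne')
    refine ⟨fun x hx => (hd x hx).differentiableAt.differentiableWithinAt, hγ ▸ b p, ?_⟩
    have e := (ih hf.pred (p - 1) rfl)
    refine ((hf.2.2.mul hs hp e (γ := γ - 1) (by rw [← hγ]; ring)).const_mul hs hp p).congr hs ?_
    intro x hx
    simp only
    rw [(hd x hx).deriv]; ring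

lemma SymC.weaken {s : Set ℝ} (hp : s ⊆ Ioi 0) {n : ℕ} {α β : ℝ} {f : ℝ → ℝ}
    (hf : SymC s n α f) (hw : ∀ x ∈ s, x ^ (α - β) ≤ 1) : SymC s n β f := by
  have b : ∀ {n : ℕ} {α β : ℝ} {f : ℝ → ℝ}, SymC s n α f → (∀ x ∈ s, x ^ (α - β) ≤ 1) →
      ∃ C : ℝ, ∀ x ∈ s, |f x| ≤ C * x ^ β := by
    intro n α β f hf hw
    obtain ⟨C, hC0, hC⟩ := hf.bound hp
    refine ⟨C, fun x hx => (hC x hx).trans ?_⟩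
    have h0 : (0:ℝ) < x := hp hx
    have : x ^ α = x ^ (α - β) * x ^ β := by rw [← Real.rpow_add h0]; ring_nf
    rw [this]
    gcongr
    have := hw x hx
    have h3 : 0 < x ^ β := by positivity
    nlinarith
  induction n generalizing α β f with
  | zero => exact b hf hw
  | succ n ih =>
    refine ⟨hf.1, b hf hw, ih hf.2.2 ?_⟩
    intro x hx
    have : α - 1 - (β - 1) = α - β := by ring
    rw [this]; exact hw x hx

lemma SymC.of_iter {s : Set ℝ} (hs : IsOpen s) {n : ℕ} {α C : ℝ} {f : ℝ → ℝ}
    (hf : ContDiffOn ℝ n f s)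
    (hb : ∀ x ∈ s, ∀ j : ℕ, j ≤ n → |iteratedDeriv j f x| ≤ C * x ^ (α - (j:ℝ))) :
    SymC s n α f := by
  have b0 : ∃ C : ℝ, ∀ x ∈ s, |f x| ≤ C * x ^ α :=
    ⟨C, fun x hx => by simpa using hb x hx 0 (Nat.zero_le _)⟩
  induction n generalizing α f with
  | zero => exact b0
  | succ n ih =>
    have hf' := (contDiffOn_succ_iff_deriv_of_isOpen (𝕜 := ℝ) (n := (n:WithTop ℕ∞)) hs).1
      (by exact_mod_cast hf)
    have hb' : ∀ x ∈ s, ∀ j : ℕ, j ≤ n →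
        |iteratedDeriv j (deriv f) x| ≤ C * x ^ (α - 1 - (j:ℝ)) := by
      intro x hx j hj
      have := hb x hx (j+1) (by omega)
      rw [iteratedDeriv_succ'] at this
      convert this using 3
      push_cast; ring
    exact ⟨hf'.1, b0, ih hf'.2.2 hb' ⟨C, fun x hx => by
      simpa using hb' x hx 0 (Nat.zero_le _)⟩⟩

/-- Comparison of a function with a power, from a lower bound on its derivative. -/
lemma compare_lower {f f' : ℝ → ℝ} {a x c α : ℝ} (ha : 0 ≤ a) (hax : a ≤ x)
    (hα : α ≠ 0) (hα' : 0 < a ∨ 0 < α) (hc : ContinuousOn f (Icc a x))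
    (hd : ∀ y ∈ Ioo a x, HasDerivAt f (f' y) y)
    (hb : ∀ y ∈ Ioo a x, c * y ^ (α - 1) ≤ f' y) :
    c / α * (x ^ α - a ^ α) ≤ f x - f a := by
  have hm : MonotoneOn (fun y => f y - c / α * y ^ α) (Icc a x) := by
    have hd' : ∀ y ∈ Ioo a x, HasDerivAt (fun y => f y - c / α * y ^ α)
        (f' y - c / α * (α * y ^ (α - 1))) y := by
      intro y hy
      exact (hd y hy).sub ((Real.hasDerivAt_rpow_const
        (Or.inl (ne_of_gt (lt_of_le_of_lt ha hy.1)))).const_mul _)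
    apply monotoneOn_of_deriv_nonneg (convex_Icc a x)
    · refine hc.sub (continuousOn_const.mul ?_)
      apply ContinuousOn.rpow_const continuousOn_id
      intro y hy
      rcases hα' with h | h
      · left; exact ne_of_gt (lt_of_lt_of_le h hy.1)
      · right; exact h.le
    · rw [interior_Icc]
      exact fun y hy => (hd' y hy).differentiableAt.differentiableWithinAt
    · rw [interior_Icc]
      intro y hy
      rw [(hd' y hy).deriv]
      have := hb y hy
      have e : c / α * (α * y ^ (α - 1)) = c * y ^ (α - 1) := by field_simp
      rw [e]; linarith
  have := hm (left_mem_Icc.2 hax) (right_mem_Icc.2 hax) hax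
  simp only at this
  linarith

lemma compare_abs {f f' : ℝ → ℝ} {a x c α : ℝ} (ha : 0 ≤ a) (hax : a ≤ x)
    (hα : α ≠ 0) (hα' : 0 < a ∨ 0 < α) (hc : ContinuousOn f (Icc a x))
    (hd : ∀ y ∈ Ioo a x, HasDerivAt f (f' y) y)
    (hb : ∀ y ∈ Ioo a x, |f' y| ≤ c * y ^ (α - 1)) :
    |f x - f a| ≤ c / α * (x ^ α - a ^ α) := by
  have h1 := compare_lower (c := -c) ha hax hα hα' hc hd
    (fun y hy => by have := (abs_le.1 (hb y hy)).1; linarith)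
  have h2 := compare_lower (c := -c) (f := fun y => - f y) (f' := fun y => - f' y)
    ha hax hα hα' hc.neg (fun y hy => (hd y hy).neg)
    (fun y hy => by have := (abs_le.1 (hb y hy)).2; linarith)
  have e : -c / α * (x ^ α - a ^ α) = -(c / α * (x ^ α - a ^ α)) := by ring
  rw [e] at h1 h2
  rw [abs_le]
  constructor <;> linarith

lemma integrable_zero {f : ℝ → ℝ} (hf : ContinuousOn f (Ioi 0)) {r e : ℝ} (hr : 0 < r)
    (he : -1 < e) (hb : ∃ C : ℝ, ∀ x ∈ Ioo 0 r, |f x| ≤ C * x ^ e) (ρ : ℝ) (hρ : 0 < ρ) :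
    IntervalIntegrable f volume 0 ρ := by
  obtain ⟨C, hC⟩ := hb
  set t := min ρ (r/2) with ht
  have ht0 : 0 < t := lt_min hρ (by linarith)
  have htr : t < r := lt_of_le_of_lt (min_le_right _ _) (by linarith)
  have htρ : t ≤ ρ := min_le_left _ _
  have h1 : IntervalIntegrable f volume 0 t := by
    have hg : IntervalIntegrable (fun x : ℝ => C * x ^ e) volume 0 t :=
      (intervalIntegral.intervalIntegrable_rpow' he).const_mul C
    refine hg.mono_fun' ?_ ?_
    · rw [uIoc_of_le ht0.le]
      exact (hf.mono (fun x hx => hx.1)).aestronglyMeasurable measurableSet_Ioc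
    · rw [uIoc_of_le ht0.le]
      refine (ae_restrict_iff' measurableSet_Ioc).2 (Eventually.of_forall fun x hx => ?_)
      exact hC x ⟨hx.1, lt_of_le_of_lt hx.2 htr⟩
  refine h1.trans (ContinuousOn.intervalIntegrable (hf.mono ?_))
  rw [uIcc_of_le htρ]
  exact fun x hx => lt_of_lt_of_le ht0 hx.1

lemma ftc_pos {f : ℝ → ℝ} (hf : ContinuousOn f (Ioi 0))
    (hi : ∀ ρ : ℝ, 0 < ρ → IntervalIntegrable f volume 0 ρ) (x : ℝ) (hx : 0 < x) :
    HasDerivAt (fun ρ => ∫ y in (0:ℝ)..ρ, f y) (f x) x := by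
  apply intervalIntegral.integral_hasDerivAt_right (hi x hx)
  · exact hf.stronglyMeasurableAtFilter isOpen_Ioi x hx
  · exact hf.continuousAt (isOpen_Ioi.mem_nhds hx)

lemma prim_cont {f : ℝ → ℝ}
    (hi : ∀ ρ : ℝ, 0 < ρ → IntervalIntegrable f volume 0 ρ) (x : ℝ) (hx : 0 < x) :
    ContinuousOn (fun ρ => ∫ y in (0:ℝ)..ρ, f y) (Icc 0 x) := by
  have := intervalIntegral.continuousOn_primitive_interval (a := 0) (b := x) (f := f) (μ := volume)
    (by rw [uIcc_of_le hx.le, integrableOn_Icc_iff_integrableOn_Ioc]; exact (hi x hx).1)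
  rwa [uIcc_of_le hx.le] at this


lemma zone1 {s : Set ℝ} (hs : IsOpen s) (hp : s ⊆ Ioi 0) {P Q w : ℝ → ℝ} {κ γ β : ℝ}
    (hκ : 0 < κ) (hγ : 1 < γ) (hQ : SymC s 4 0 Q)
    (hP : ∀ x ∈ s, P x = κ * x ^ γ * (1 + Q x))
    (hq0 : ∀ x ∈ s, |Q x| ≤ 1/4) (hq1 : ∀ x ∈ s, |x * deriv Q x| ≤ 1/4)
    (hw : w = fun x => κ * (γ * (1 + Q x) + x * deriv Q x)) :
    SymC s 3 0 w ∧ (∀ x ∈ s, κ / 2 ≤ w x) ∧ (∀ x ∈ s, deriv P x = x ^ (γ - 1) * w x) ∧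
    (SymC s 4 β Q → SymC s 2 (β - 1) (deriv w)) := by
  subst hw
  refine ⟨?_, ?_, ?_, ?_⟩
  · refine (((((SymC.const 3 1).add hs hQ.pred).const_mul hs hp γ).add hs
      ((SymC.id hs hp 3).mul hs hp hQ.2.2 (by ring))).const_mul hs hp κ)
  · intro x hx
    have h1 := abs_le.1 (hq0 x hx)
    have h2 := abs_le.1 (hq1 x hx)
    have : 1/2 ≤ γ * (1 + Q x) + x * deriv Q x := by nlinarith
    nlinarith
  · intro x hx
    have h0 : (0:ℝ) < x := hp hx
    have e : P =ᶠ[nhds x] fun x => κ * x ^ γ * (1 + Q x) :=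
      Filter.eventuallyEq_of_mem (hs.mem_nhds hx) hP
    have hd : HasDerivAt (fun x => κ * x ^ γ * (1 + Q x))
        (κ * (γ * x ^ (γ - 1)) * (1 + Q x) + κ * x ^ γ * deriv Q x) x :=
      ((Real.hasDerivAt_rpow_const (Or.inl h0.ne')).const_mul κ).mul
        ((hQ.1.differentiableAt (hs.mem_nhds hx)).hasDerivAt.const_add 1)
    rw [e.deriv_eq, hd.deriv]
    have : x ^ γ = x ^ (γ - 1) * x := by
      rw [← Real.rpow_add_one h0.ne']; ring_nf
    rw [this]; ring
  · intro hQ'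
    have e1 : SymC s 3 β (fun x => κ * (γ * Q x + x * deriv Q x)) :=
      (((hQ'.pred).const_mul hs hp γ).add hs
      ((SymC.id hs hp 3).mul hs hp hQ'.2.2 (by ring))).const_mul hs hp κ
    refine e1.2.2.congr hs ?_
    intro x hx
    have : (fun x => κ * (γ * (1 + Q x) + x * deriv Q x)) =
        fun x => κ * γ + (κ * (γ * Q x + x * deriv Q x)) := by ext x; ring
    rw [this, deriv_const_add]

lemma zone2 {s : Set ℝ} (hs : IsOpen s) (hp : s ⊆ Ioi 0) {k h : ℝ → ℝ} {θ c c1 C1 : ℝ}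
    (hh : SymC s 3 0 h) (hc : 0 < c) (hl : ∀ x ∈ s, c ≤ h x)
    (hdk : ∀ x ∈ s, HasDerivAt k (x ^ (θ - 1) * h x) x)
    (hc1 : 0 < c1) (hk1 : ∀ x ∈ s, c1 * x ^ θ ≤ k x) (hk2 : ∀ x ∈ s, k x ≤ C1 * x ^ θ) :
    SymC s 4 θ k ∧ SymC s 3 (θ - 1) (deriv k) ∧
    (∀ p q γ : ℝ, θ * p + (θ - 1) * q = γ → SymC s 3 γ (fun x => k x ^ p * deriv k x ^ q)) := by
  have e1 : SymC s 3 (θ - 1) (deriv k) := by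
    refine ((SymC.id_rpow hs hp 3 (θ - 1)).mul hs hp hh (by ring)).congr hs ?_
    intro x hx
    exact (hdk x hx).deriv.symm
  have e2 : SymC s 4 θ k := by
    refine ⟨fun x hx => (hdk x hx).differentiableAt.differentiableWithinAt, ⟨C1, fun x hx => ?_⟩,
      e1⟩
    have h0 : (0:ℝ) < x := hp hx
    rw [abs_of_nonneg (le_trans (by positivity) (hk1 x hx))]
    exact hk2 x hx
  refine ⟨e2, e1, fun p q γ hγ => ?_⟩
  refine (e2.pred.rpow hs hp hc1 hk1 p rfl).mul hs hp (e1.rpow hs hp hc ?_ q rfl) hγ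
  intro x hx
  have h0 : (0:ℝ) < x := hp hx
  rw [(hdk x hx).deriv, mul_comm]
  gcongr
  exact hl x hx

/-- Functions of size one whose derivative gains `x^β`. -/
def FlatC (s : Set ℝ) (β : ℝ) (h : ℝ → ℝ) : Prop :=
  SymC s 3 0 h ∧ SymC s 2 (β - 1) (deriv h)

lemma FlatC.mul {s : Set ℝ} (hs : IsOpen s) (hp : s ⊆ Ioi 0) {β : ℝ} {f g : ℝ → ℝ}
    (hf : FlatC s β f) (hg : FlatC s β g) : FlatC s β (fun x => f x * g x) := by
  refine ⟨hf.1.mul hs hp hg.1 (by ring), ?_⟩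
  have e1 := hf.2.mul hs hp hg.1.pred (γ := β - 1) (by ring)
  have e2 := hf.1.pred.mul hs hp hg.2 (γ := β - 1) (by ring)
  refine (e1.add hs e2).congr hs ?_
  intro x hx
  exact (deriv_fun_mul (hf.1.1.differentiableAt (hs.mem_nhds hx))
        (hg.1.1.differentiableAt (hs.mem_nhds hx))).symm

lemma FlatC.const {s : Set ℝ} {β : ℝ} (c : ℝ) : FlatC s β (fun _ => c) := by
  refine ⟨SymC.const 3 c, ?_⟩
  have : deriv (fun _ : ℝ => c) = fun _ => 0 := by ext x; simp
  rw [this]; exact SymC.zero _ _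

lemma FlatC.congr {s : Set ℝ} (hs : IsOpen s) {β : ℝ} {f g : ℝ → ℝ}
    (hf : FlatC s β f) (hfg : EqOn f g s) : FlatC s β g := by
  refine ⟨hf.1.congr hs hfg, hf.2.congr hs ?_⟩
  intro x hx
  exact (hfg.eventuallyEq_of_mem (hs.mem_nhds hx)).deriv_eq

lemma FlatC.rpow {s : Set ℝ} (hs : IsOpen s) (hp : s ⊆ Ioi 0) {β c : ℝ} {f : ℝ → ℝ}
    (hf : FlatC s β f) (hc : 0 < c) (hl : ∀ x ∈ s, c ≤ f x) (p : ℝ) :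
    FlatC s β (fun x => f x ^ p) := by
  have hl' : ∀ x ∈ s, c * x ^ (0:ℝ) ≤ f x := by simpa using hl
  refine ⟨hf.1.rpow hs hp hc hl' p (by ring), ?_⟩
  have e := hf.1.pred.rpow hs hp hc hl' (p - 1) (γ := 0) (by ring)
  refine ((hf.2.mul hs hp e (γ := β - 1) (by ring)).const_mul hs hp p).congr hs ?_
  intro x hx
  have hd : HasDerivAt (fun x => f x ^ p) (deriv f x * p * f x ^ (p - 1)) x :=
    (hf.1.1.differentiableAt (hs.mem_nhds hx)).hasDerivAt.rpow_const
        (Or.inl (lt_of_lt_of_le hc (hl x hx)).ne')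
  simp only
  rw [hd.deriv]; ring

/-- Small-density zone. -/
lemma small_zone {k h : ℝ → ℝ} {r θ β c : ℝ} (hθ : 0 < θ) (hβ : 0 < β)
    (hh : FlatC (Ioo 0 r) β h) (hc : 0 < c) (hl : ∀ x ∈ Ioo 0 r, c ≤ h x)
    (hdk : ∀ x ∈ Ioo 0 r, HasDerivAt k (x ^ (θ - 1) * h x) x) (hk0 : k 0 = 0)
    (hkc : ∀ x, 0 < x → ContinuousOn k (Icc 0 x)) :
    (∀ p q γ : ℝ, θ * p + (θ - 1) * q = γ →
      SymC (Ioo 0 r) 3 γ (fun x => k x ^ p * deriv k x ^ q)) ∧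
    (∀ M p q γ : ℝ, θ * p + (θ - 1) * q + γ = 0 →
      FlatC (Ioo 0 r) β (fun x => M * (x ^ γ * (k x ^ p * deriv k x ^ q)))) := by
  have hs : IsOpen (Ioo (0:ℝ) r) := isOpen_Ioo
  have hp : Ioo (0:ℝ) r ⊆ Ioi 0 := fun x hx => hx.1
  obtain ⟨C, hC0, hC⟩ := hh.1.bound hp
  simp only [Real.rpow_zero, mul_one] at hC
  have hsub : ∀ x ∈ Ioo 0 r, ∀ y ∈ Ioo 0 x, y ∈ Ioo 0 r :=
    fun x hx y hy => ⟨hy.1, hy.2.trans hx.2⟩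
  have hk1 : ∀ x ∈ Ioo 0 r, c / θ * x ^ θ ≤ k x := by
    intro x hx
    have := compare_lower (f := k) (f' := fun x => x ^ (θ - 1) * h x) (c := c) (α := θ)
      le_rfl hx.1.le hθ.ne' (Or.inr hθ) (hkc x hx.1) (fun y hy => hdk y (hsub x hx y hy))
      (fun y hy => by
        have h0 : 0 < y := hy.1
        rw [mul_comm]; gcongr; exact hl y (hsub x hx y hy))
    rwa [hk0, Real.zero_rpow hθ.ne', sub_zero, sub_zero] at this
  have hk2 : ∀ x ∈ Ioo 0 r, k x ≤ C / θ * x ^ θ := by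
    intro x hx
    have := compare_abs (f := k) (f' := fun x => x ^ (θ - 1) * h x) (c := C) (α := θ)
      le_rfl hx.1.le hθ.ne' (Or.inr hθ) (hkc x hx.1) (fun y hy => hdk y (hsub x hx y hy))
      (fun y hy => by
        have h0 : 0 < y := hy.1
        rw [mul_comm, abs_mul, abs_of_pos (a := y ^ (θ - 1)) (by positivity)]
        gcongr; exact hC y (hsub x hx y hy))
    rw [hk0, Real.zero_rpow hθ.ne', sub_zero, sub_zero] at this
    exact (le_abs_self _).trans this
  obtain ⟨z1, z2, z3⟩ := zone2 hs hp hh.1 hc hl hdk (by positivity) hk1 hk2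
  refine ⟨z3, ?_⟩
  -- the quantity x * deriv k - θ * k
  have hg : SymC (Ioo 0 r) 3 (θ + β) (fun x => x ^ θ * h x - θ * k x) := by
    have hd : ∀ x ∈ Ioo 0 r, HasDerivAt (fun x => x ^ θ * h x - θ * k x) (x ^ θ * deriv h x) x := by
      intro x hx
      have h0 : 0 < x := hx.1
      have := ((Real.hasDerivAt_rpow_const (p := θ) (Or.inl h0.ne')).mul
        (hh.1.1.differentiableAt (hs.mem_nhds hx)).hasDerivAt).sub ((hdk x hx).const_mul θ)
      refine this.congr_deriv ?_
      ring
    have e := (SymC.id_rpow hs hp 2 θ).mul hs hp hh.2 (γ := θ + β - 1) (by ring)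
    obtain ⟨D, hD0, hD⟩ := e.bound hp
    refine ⟨fun x hx => (hd x hx).differentiableAt.differentiableWithinAt,
      ⟨D / (θ + β), fun x hx => ?_⟩, e.congr hs (fun x hx => (hd x hx).deriv.symm)⟩
    have hcont : ContinuousOn (fun x => x ^ θ * h x - θ * k x) (Icc 0 x) := by
      refine ContinuousOn.sub ?_ (continuousOn_const.mul (hkc x hx.1))
      intro y hy
      rcases eq_or_lt_of_le hy.1 with h0 | h0
      · subst h0
        have hz : (0:ℝ) ^ θ = 0 := Real.zero_rpow hθ.ne'
        have ht : Tendsto (fun y : ℝ => (C + |h 0|) * y ^ θ) (nhdsWithin 0 (Icc 0 x)) (nhds 0) := by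
          have : ContinuousAt (fun y : ℝ => (C + |h 0|) * y ^ θ) 0 :=
            continuousAt_const.mul (Real.continuousAt_rpow_const 0 θ (Or.inr hθ.le))
          have := this.tendsto.mono_left (nhdsWithin_le_nhds (s := Icc 0 x))
          simpa [hz] using this
        unfold ContinuousWithinAt
        simp only [hz, zero_mul]
        refine squeeze_zero_norm' ?_ ht
        filter_upwards [self_mem_nhdsWithin] with y hy
        have hy0 : 0 ≤ y := hy.1
        rw [Real.norm_eq_abs, abs_mul, abs_of_nonneg (a := y ^ θ) (by positivity), mul_comm]
        gcongr
        rcases eq_or_lt_of_le hy0 with h1 | h1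
        · rw [← h1]; linarith
        · have := hC y ⟨h1, lt_of_le_of_lt hy.2 hx.2⟩
          have := abs_nonneg (h 0); linarith
      · have hy' : y ∈ Ioo 0 r := ⟨h0, lt_of_le_of_lt hy.2 hx.2⟩
        exact ((Real.continuousAt_rpow_const y θ (Or.inr hθ.le)).mul
          (hh.1.1.differentiableAt (hs.mem_nhds hy')).continuousAt).continuousWithinAt
    have hne : θ + β ≠ 0 := by positivity
    have := compare_abs (c := D) (α := θ + β) le_rfl hx.1.le hne
      (Or.inr (by positivity)) hcont (fun y hy => hd y (hsub x hx y hy))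
      (fun y hy => hD y (hsub x hx y hy))
    simpa [hk0, Real.zero_rpow hθ.ne', Real.zero_rpow hne] using this
  have h2 : FlatC (Ioo 0 r) β (fun x => k x * x ^ (-θ)) := by
    refine ⟨z1.pred.mul hs hp (SymC.id_rpow hs hp 3 (-θ)) (by ring), ?_⟩
    refine (hg.pred.mul hs hp (SymC.id_rpow hs hp 2 (-θ - 1)) (γ := β - 1) (by ring)).congr hs ?_
    intro x hx
    have h0 : 0 < x := hx.1
    have := ((hdk x hx).mul (Real.hasDerivAt_rpow_const (p := -θ) (Or.inl h0.ne')))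
    have e := this.deriv
    simp only
    change _ = deriv (k * fun x => x ^ (-θ)) x
    rw [e]
    have e1 : x ^ θ = x ^ (θ - 1) * x := by rw [← Real.rpow_add_one h0.ne']; ring_nf
    have e2 : x ^ (-θ) = x ^ (-θ - 1) * x := by rw [← Real.rpow_add_one h0.ne']; ring_nf
    rw [e1, e2]; ring
  have h2l : ∀ x ∈ Ioo 0 r, c / θ ≤ k x * x ^ (-θ) := by
    intro x hx
    have h0 : 0 < x := hx.1
    rw [Real.rpow_neg h0.le, ← div_eq_mul_inv, le_div_iff₀ (by positivity)]
    exact hk1 x hx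
  intro M p q γ hγ
  refine ((FlatC.const M).mul hs hp ((h2.rpow hs hp (by positivity) h2l p).mul hs hp
    (hh.rpow hs hp hc hl q))).congr hs ?_
  intro x hx
  have h0 : 0 < x := hx.1
  have hkp : 0 < k x := lt_of_lt_of_le (by positivity) (hk1 x hx)
  have hhp : 0 < h x := lt_of_lt_of_le hc (hl x hx)
  simp only
  rw [(hdk x hx).deriv, Real.mul_rpow hkp.le (by positivity),
    Real.mul_rpow (by positivity) hhp.le, ← Real.rpow_mul h0.le, ← Real.rpow_mul h0.le]
  have : x ^ (-θ * p) = x ^ γ * x ^ ((θ - 1) * q) := by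
    rw [← Real.rpow_add h0]; congr 1; linarith
  rw [this]; ring

/-- antiderivatives in the large-density zone -/
lemma prim_large {I F : ℝ → ℝ} {R α β : ℝ} {n : ℕ} (hR : 1 ≤ R) (hα : α ≠ 0) (hαβ : α ≤ β)
    (hβ : 0 ≤ β) (hd : ∀ x, 0 < x → HasDerivAt I (F x) x) (hF : SymC (Ioi R) n (α - 1) F) :
    SymC (Ioi R) (n+1) β I := by
  have hp : Ioi R ⊆ Ioi 0 := fun x hx => lt_trans (by linarith) (show R < x from hx)
  have hs : IsOpen (Ioi R) := isOpen_Ioi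
  obtain ⟨D, hD0, hD⟩ := hF.bound hp
  refine ⟨fun x hx => (hd x (hp hx)).differentiableAt.differentiableWithinAt,
      ⟨|I R| + D / |α| * (1 + R ^ α), fun x hx => ?_⟩, ?_⟩
  · have hx' : R < x := hx
    have hx0 : 0 < x := hp hx
    have h1 := compare_abs (f := I) (f' := F) (c := D) (α := α) (a := R) (x := x) (by linarith)
      hx'.le hα (Or.inl (by linarith))
      (fun y hy => (hd y (by linarith [hy.1])).continuousAt.continuousWithinAt)
      (fun y hy => hd y (by linarith [hy.1])) (fun y hy => hD y hy.1)
    have hxβ : 1 ≤ x ^ β := Real.one_le_rpow (by linarith) hβ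
    have hxα : x ^ α ≤ x ^ β := Real.rpow_le_rpow_of_exponent_le (by linarith) hαβ
    have hRα : 0 < R ^ α := by positivity
    have hxα0 : 0 < x ^ α := by positivity
    have h2 : D / α * (x ^ α - R ^ α) ≤ D / |α| * (x ^ α + R ^ α) := by
      refine (le_abs_self _).trans ?_
      rw [abs_mul, abs_div, abs_of_pos hD0]
      gcongr
      refine (abs_sub _ _).trans ?_
      rw [abs_of_pos hRα, abs_of_pos hxα0]
    have h3 : |I x| ≤ |I R| + |I x - I R| := by
      have := abs_add_le (I R) (I x - I R)
      simpa using this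
    have h4 : D / |α| * (x ^ α + R ^ α) ≤ D / |α| * ((1 + R ^ α) * x ^ β) := by
      gcongr
      nlinarith
    have h5 : |I R| ≤ |I R| * x ^ β := by
      have := abs_nonneg (I R); nlinarith
    calc |I x| ≤ |I R| * x ^ β + D / |α| * ((1 + R ^ α) * x ^ β) := by linarith
      _ = _ := by ring
  · have : SymC (Ioi R) n (β - 1) F := by
      refine hF.weaken hp ?_
      intro x hx
      have hx' : R < x := hx
      exact Real.rpow_le_one_of_one_le_of_nonpos (by linarith) (by linarith)
    exact this.congr hs (fun x hx => (hd x (hp hx)).deriv.symm)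


lemma large_zone {k h f0 : ℝ → ℝ} {R θ c : ℝ} (hR : 1 ≤ R) (hθ : 0 < θ)
    (hh : SymC (Ioi R) 3 0 h) (hc : 0 < c) (hl : ∀ x ∈ Ioi R, c ≤ h x)
    (hd : ∀ x, 0 < x → HasDerivAt k (f0 x) x)
    (hf0 : ∀ x ∈ Ioi R, f0 x = x ^ (θ - 1) * h x) (hkR : 0 < k R) :
    ∀ p q γ : ℝ, θ * p + (θ - 1) * q = γ →
      SymC (Ioi R) 3 γ (fun x => k x ^ p * deriv k x ^ q) := by
  have hp : Ioi R ⊆ Ioi 0 := fun x hx => lt_trans (by linarith) (show R < x from hx)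
  have hs : IsOpen (Ioi R) := isOpen_Ioi
  obtain ⟨C, hC0, hC⟩ := hh.bound hp
  simp only [Real.rpow_zero, mul_one] at hC
  have hRθ : 0 < R ^ θ := by positivity
  have hcont : ∀ x, ContinuousOn k (Icc R x) := fun x y hy =>
    (hd y (by linarith [hy.1])).continuousAt.continuousWithinAt
  have hdk : ∀ x ∈ Ioi R, HasDerivAt k (x ^ (θ - 1) * h x) x := by
    intro x hx
    rw [← hf0 x hx]; exact hd x (hp hx)
  set c1 := min (c / θ) (k R / R ^ θ) with hc1
  have hc10 : 0 < c1 := lt_min (by positivity) (by positivity)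
  have hc1R : c1 * R ^ θ ≤ k R := by
    rw [← le_div_iff₀ hRθ]; exact min_le_right _ _
  have hc1c : c1 * θ ≤ c := by
    rw [← le_div_iff₀ hθ]; exact min_le_left _ _
  refine (zone2 (c1 := c1) (C1 := k R + C / θ) hs hp hh hc hl hdk hc10 ?_ ?_).2.2
  · intro x hx
    have hx' : R < x := hx
    have := compare_lower (f := k) (f' := fun x => x ^ (θ - 1) * h x) (c := c1 * θ) (α := θ)
      (a := R) (x := x) (by linarith) hx'.le hθ.ne' (Or.inr hθ) (hcont x)
      (fun y hy => hdk y hy.1)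
      (fun y hy => by
        have h0 : 0 < y := hp hy.1
        rw [mul_comm (y ^ (θ - 1))]
        gcongr
        exact hc1c.trans (hl y hy.1))
    rw [mul_div_assoc, div_self hθ.ne', mul_one] at this
    linarith
  · intro x hx
    have hx' : R < x := hx
    have := compare_abs (f := k) (f' := fun x => x ^ (θ - 1) * h x) (c := C) (α := θ)
      (a := R) (x := x) (by linarith) hx'.le hθ.ne' (Or.inr hθ) (hcont x)
      (fun y hy => hdk y hy.1)
      (fun y hy => by
        have h0 : 0 < y := hp hy.1
        rw [mul_comm, abs_mul, abs_of_pos (a := y ^ (θ - 1)) (by positivity)]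
        gcongr; exact hC y hy.1)
    have h1 := (le_abs_self _).trans this
    have h2 : 1 ≤ x ^ θ := Real.one_le_rpow (by linarith) hθ.le
    have h3 : 0 < C / θ := by positivity
    nlinarith

lemma Q_bounds {s : Set ℝ} (hp : s ⊆ Ioi 0) {Q : ℝ → ℝ} {C β : ℝ}
    (hb : ∀ x ∈ s, ∀ j : ℕ, j ≤ 4 → |iteratedDeriv j Q x| ≤ C * x ^ (β - (j : ℝ)))
    (hC : ∀ x ∈ s, C * x ^ β ≤ 1/4) :
    (∀ x ∈ s, |Q x| ≤ 1/4) ∧ (∀ x ∈ s, |x * deriv Q x| ≤ 1/4) := by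
  constructor
  · intro x hx
    have := hb x hx 0 (by norm_num)
    simp at this
    have := hC x hx
    linarith
  · intro x hx
    have h0 : 0 < x := hp hx
    have h1 := hb x hx 1 (by norm_num)
    rw [iteratedDeriv_one] at h1
    rw [abs_mul, abs_of_pos h0]
    have e : x ^ β = x * x ^ (β - ((1:ℕ):ℝ)) := by
      rw [Nat.cast_one, mul_comm, ← Real.rpow_add_one h0.ne']; ring_nf
    calc x * |deriv Q x| ≤ x * (C * x ^ (β - ((1:ℕ):ℝ))) := by gcongr
      _ = C * x ^ β := by rw [e]; ring
      _ ≤ _ := hC x hx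

lemma SymC.final {R α : ℝ} (hR : 1 ≤ R) {f : ℝ → ℝ} (hf : SymC (Ioi R) 2 α f) :
    ∃ C : ℝ, 0 < C ∧ ∀ x, R < x →
      |f x| + x * |deriv f x| + x ^ 2 * |deriv (deriv f) x| ≤ C * x ^ α := by
  have hp : Ioi R ⊆ Ioi 0 := fun x hx => lt_trans (by linarith) (show R < x from hx)
  obtain ⟨C0, hC0, h0⟩ := hf.bound hp
  obtain ⟨C1, hC1, h1⟩ := hf.2.2.bound hp
  obtain ⟨C2, hC2, h2⟩ := SymC.bound (n := 0) (α := α - 1 - 1) (f := deriv (deriv f))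
    hf.2.2.2.2 hp
  refine ⟨C0 + C1 + C2, by positivity, fun x hx => ?_⟩
  have hx0 : 0 < x := hp hx
  have e1 : x ^ α = x * x ^ (α - 1) := by
    rw [mul_comm, ← Real.rpow_add_one hx0.ne']; ring_nf
  have e2 : x ^ α = x ^ 2 * x ^ (α - 1 - 1) := by
    rw [e1, pow_two, mul_assoc]; congr 1
    rw [mul_comm, ← Real.rpow_add_one hx0.ne']; ring_nf
  have k1 : x * |deriv f x| ≤ C1 * x ^ α := by
    calc _ ≤ x * (C1 * x ^ (α - 1)) := by gcongr; exact h1 x hx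
      _ = _ := by rw [e1]; ring
  have k2 : x ^ 2 * |deriv (deriv f) x| ≤ C2 * x ^ α := by
    calc _ ≤ x ^ 2 * (C2 * x ^ (α - 1 - 1)) := by gcongr; exact h2 x hx
      _ = _ := by rw [e2]; ring
  have := h0 x hx
  nlinarith

theorem entropy_flux_kernel_coefficients
    (P Q₁ Q₂ : ℝ → ℝ) (ρstar ρss γ₁ γ₂ κ₁ κ₂ Cs Css εe : ℝ)
    (hPC1 : ContDiffOn ℝ 1 P (Ici 0))
    (hPC4 : ContDiffOn ℝ 4 P (Ioi 0))
    (hH1 : ∀ ρ : ℝ, 0 < ρ → 0 < deriv P ρ ∧ 0 < 2 * deriv P ρ + ρ * deriv (deriv P) ρ)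
    (hρstar : 0 < ρstar) (hγ₁ : 1 < γ₁) (hγ₁3 : γ₁ < 3) (hκ₁ : 0 < κ₁) (hCs : 0 < Cs)
    (hQ₁C4 : ContDiffOn ℝ 4 Q₁ (Ioi 0))
    (hPsmall : ∀ ρ ∈ Ico (0:ℝ) ρstar, P ρ = κ₁ * ρ ^ γ₁ * (1 + Q₁ ρ))
    (hQ₁bd : ∀ ρ ∈ Ioo (0:ℝ) ρstar, ∀ j : ℕ, j ≤ 4 →
      |iteratedDeriv j Q₁ ρ| ≤ Cs * ρ ^ (γ₁ - 1 - (j : ℝ)))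
    (hρss : ρstar < ρss) (hγ₂ : 6/5 < γ₂) (hγ₂1 : γ₂ ≤ γ₁) (hκ₂ : 0 < κ₂)
    (hεe : 0 < εe) (hCss : 0 < Css)
    (hQ₂C4 : ContDiffOn ℝ 4 Q₂ (Ioi 0))
    (hPlarge : ∀ ρ : ℝ, ρss ≤ ρ → P ρ = κ₂ * ρ ^ γ₂ * (1 + Q₂ ρ))
    (hQ₂bd : ∀ ρ : ℝ, ρss ≤ ρ → ∀ j : ℕ, j ≤ 4 →
      |iteratedDeriv j Q₂ ρ| ≤ Css * ρ ^ (-εe - (j : ℝ)))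
    (lam₁ Mlam θ₁ θ₂ : ℝ)
    (hlam₁ : lam₁ = (3 - γ₁) / (2 * (γ₁ - 1)))
    (hMlam : Mlam = (2 * lam₁ / Real.sqrt (2 * lam₁ + 1) * ∫ z in (-1:ℝ)..1, (1 - z ^ 2) ^ lam₁)⁻¹)
    (hθ₁ : θ₁ = (γ₁ - 1) / 2) (hθ₂ : θ₂ = (γ₂ - 1) / 2)
    (k a₁ a₂ : ℝ → ℝ)
    (hk : ∀ ρ : ℝ, k ρ = ∫ y in (0:ℝ)..ρ, Real.sqrt (deriv P y) / y)
    (ha₁ : ∀ ρ : ℝ, a₁ ρ = Mlam * k ρ ^ (-lam₁) * deriv k ρ ^ (-(1:ℝ)/2))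
    (ha₂ : ∀ ρ : ℝ, a₂ ρ = -(4 * (lam₁ + 1))⁻¹ * k ρ ^ (-lam₁ - 1) * deriv k ρ ^ (-(1:ℝ)/2) *
      ∫ s in (0:ℝ)..ρ, k s ^ lam₁ * deriv k s ^ (-(1:ℝ)/2) * deriv (deriv a₁) s)
    (b₁ b₂ : ℝ → ℝ)
    (hb₁ : ∀ ρ : ℝ, b₁ ρ = Mlam * ρ * k ρ ^ (-lam₁ - 1) * deriv k ρ ^ ((1:ℝ)/2))
    (hb₂ : ∀ ρ : ℝ, b₂ ρ =
      -(4 * (lam₁ + 1))⁻¹ * ρ * deriv k ρ ^ ((1:ℝ)/2) * k ρ ^ (-(lam₁ + 2)) *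
        (∫ s in (0:ℝ)..ρ, k s ^ lam₁ * deriv k s ^ (-(1:ℝ)/2) * deriv (deriv a₁) s)
      - (4 * (lam₁ + 1))⁻¹ * k ρ ^ (-(lam₁ + 2)) * deriv k ρ ^ (-(1:ℝ)/2) *
        (∫ s in (0:ℝ)..ρ, k s ^ (lam₁ + 1) * deriv k s ^ (-(1:ℝ)/2) * deriv (deriv b₁) s)
      + (4 * (lam₁ + 1))⁻¹ * k ρ ^ (-(lam₁ + 2)) * deriv k ρ ^ (-(1:ℝ)/2) *
        (∫ s in (0:ℝ)..ρ, s * k s ^ lam₁ * deriv k s ^ ((1:ℝ)/2) * deriv (deriv a₁) s)) :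
    (∀ ρ : ℝ, 0 < ρ →
      IntervalIntegrable
        (fun s => k s ^ lam₁ * deriv k s ^ (-(1:ℝ)/2) * deriv (deriv a₁) s) volume 0 ρ ∧
      IntervalIntegrable
        (fun s => k s ^ (lam₁ + 1) * deriv k s ^ (-(1:ℝ)/2) * deriv (deriv b₁) s) volume 0 ρ ∧
      IntervalIntegrable
        (fun s => s * k s ^ lam₁ * deriv k s ^ ((1:ℝ)/2) * deriv (deriv a₁) s) volume 0 ρ) ∧
    (∀ ρ : ℝ, 0 < ρ → 0 < b₁ ρ) ∧
    (∃ C : ℝ, 0 < C ∧ ∃ ρbar : ℝ, ρss ≤ ρbar ∧ ∀ ρ : ℝ, ρbar ≤ ρ →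
      (|b₁ ρ| + ρ * |deriv b₁ ρ| + ρ ^ 2 * |deriv (deriv b₁) ρ|
        ≤ C * ρ ^ ((1:ℝ)/2 - θ₂ / (2 * θ₁))) ∧
      (|b₂ ρ| + ρ * |deriv b₂ ρ| + ρ ^ 2 * |deriv (deriv b₂) ρ|
        ≤ C * ρ ^ ((1:ℝ)/2 - θ₂ * (1 + 1 / (2 * θ₁))))) := by
  have hθ1 : 0 < θ₁ := by rw [hθ₁]; linarith
  have hθ2 : 0 < θ₂ := by rw [hθ₂]; linarith
  have hlamθ : lam₁ + 1/2 = 1 / (2 * θ₁) := by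
    have : γ₁ - 1 ≠ 0 := by linarith
    rw [hlam₁, hθ₁]; field_simp; ring
  have hθlam : θ₁ * lam₁ = (1 - θ₁) / 2 := by
    have : θ₁ * (lam₁ + 1/2) = 1/2 := by rw [hlamθ]; field_simp
    linarith
  have hlam0 : 0 < lam₁ := by
    rw [hlam₁]; apply div_pos <;> linarith
  have hM : 0 < Mlam := by
    rw [hMlam]
    have hI : 0 < ∫ z in (-1:ℝ)..1, (1 - z ^ 2) ^ lam₁ := by
      apply intervalIntegral.intervalIntegral_pos_of_pos_on
      · apply Continuous.intervalIntegrable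
        exact Continuous.rpow_const (by fun_prop) (fun x => Or.inr hlam0.le)
      · intro x hx
        have : 0 < 1 - x ^ 2 := by nlinarith [hx.1, hx.2]
        positivity
      · norm_num
    positivity
  -- regularity of `k`
  set f0 : ℝ → ℝ := fun y => Real.sqrt (deriv P y) / y with hf0def
  have hP' : ContDiffOn ℝ 3 (deriv P) (Ioi 0) :=
    ((contDiffOn_succ_iff_deriv_of_isOpen (𝕜 := ℝ) (n := (3:WithTop ℕ∞)) isOpen_Ioi).1
      (by norm_num; exact hPC4)).2.2
  have hf0C : ContDiffOn ℝ 3 f0 (Ioi 0) :=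
    (hP'.sqrt (fun x hx => (hH1 x hx).1.ne')).div contDiffOn_id (fun x hx => ne_of_gt hx)
  have hf0pos : ∀ x, 0 < x → 0 < f0 x := fun x hx =>
    div_pos (Real.sqrt_pos.2 (hH1 x hx).1) hx
  -- small zone
  have hβ : 0 < γ₁ - 1 := by linarith
  obtain ⟨r, hr0, hr1, hrs, hrC⟩ : ∃ r : ℝ, 0 < r ∧ r ≤ 1 ∧ r ≤ ρstar ∧
      ∀ x ∈ Ioo 0 r, Cs * x ^ (γ₁ - 1) ≤ 1/4 := by
    refine ⟨min 1 (min ρstar ((1 / (4 * Cs)) ^ (1 / (γ₁ - 1)))), ?_, min_le_left _ _,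
      (min_le_right _ _).trans (min_le_left _ _), ?_⟩
    · exact lt_min one_pos (lt_min hρstar (by positivity))
    · intro x hx
      have h1 : x ≤ (1 / (4 * Cs)) ^ (1 / (γ₁ - 1)) :=
        hx.2.le.trans ((min_le_right _ _).trans (min_le_right _ _))
      have h2 := Real.rpow_le_rpow hx.1.le h1 hβ.le
      rw [← Real.rpow_mul (by positivity), one_div_mul_cancel hβ.ne', Real.rpow_one] at h2
      calc Cs * x ^ (γ₁ - 1) ≤ Cs * (1 / (4 * Cs)) := by gcongr
        _ = 1/4 := by field_simp
  have hs1 : IsOpen (Ioo (0:ℝ) r) := isOpen_Ioo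
  have hp1 : Ioo (0:ℝ) r ⊆ Ioi 0 := fun x hx => hx.1
  have hQ1b : ∀ x ∈ Ioo (0:ℝ) r, ∀ j : ℕ, j ≤ 4 →
      |iteratedDeriv j Q₁ x| ≤ Cs * x ^ (γ₁ - 1 - (j : ℝ)) :=
    fun x hx => hQ₁bd x ⟨hx.1, lt_of_lt_of_le hx.2 hrs⟩
  have hQ1 : SymC (Ioo 0 r) 4 (γ₁ - 1) Q₁ :=
    SymC.of_iter hs1 (by exact_mod_cast hQ₁C4.mono hp1) hQ1b
  have hQ10 : SymC (Ioo 0 r) 4 0 Q₁ := hQ1.weaken hp1 (fun x hx =>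
    Real.rpow_le_one hx.1.le (hx.2.le.trans hr1) (by linarith))
  obtain ⟨q10, q11⟩ := Q_bounds hp1 hQ1b hrC
  obtain ⟨w1S, w1l, w1P, w1d⟩ := zone1 (β := γ₁ - 1) hs1 hp1 hκ₁ hγ₁ hQ10
    (fun x hx => hPsmall x ⟨hx.1.le, lt_of_lt_of_le hx.2 hrs⟩) q10 q11 rfl
  set w1 : ℝ → ℝ := fun x => κ₁ * (γ₁ * (1 + Q₁ x) + x * deriv Q₁ x) with hw1
  have hf0w : ∀ {γ θ κ : ℝ} {w : ℝ → ℝ} (x : ℝ), 0 < x → θ = (γ - 1) / 2 → 0 < κ →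
      κ / 2 ≤ w x → deriv P x = x ^ (γ - 1) * w x → f0 x = x ^ (θ - 1) * w x ^ ((1:ℝ)/2) := by
    intro γ θ κ w x hx hθ hκ hw hP
    have hwp : 0 < w x := by linarith
    simp only [hf0def]
    rw [hP, Real.sqrt_eq_rpow, Real.mul_rpow (by positivity) hwp.le, ← Real.rpow_mul hx.le,
      Real.rpow_sub_one hx.ne', hθ]
    have : (γ - 1) * (1/2) = (γ - 1) / 2 := by ring
    rw [this]; ring
  have h1F : FlatC (Ioo 0 r) (γ₁ - 1) (fun x => w1 x ^ ((1:ℝ)/2)) :=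
    FlatC.rpow hs1 hp1 ⟨w1S, w1d hQ1⟩ (by positivity) w1l _
  have h1l : ∀ x ∈ Ioo 0 r, (κ₁ / 2) ^ ((1:ℝ)/2) ≤ w1 x ^ ((1:ℝ)/2) := fun x hx =>
    Real.rpow_le_rpow (by positivity) (w1l x hx) (by norm_num)
  have hf01 : ∀ x ∈ Ioo 0 r, f0 x = x ^ (θ₁ - 1) * w1 x ^ ((1:ℝ)/2) := fun x hx =>
    hf0w x hx.1 hθ₁ hκ₁ (w1l x hx) (w1P x hx)
  have hf0int : ∀ ρ : ℝ, 0 < ρ → IntervalIntegrable f0 volume 0 ρ := by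
    refine integrable_zero hf0C.continuousOn hr0 (e := θ₁ - 1) (by linarith) ?_
    have e : SymC (Ioo 0 r) 3 (θ₁ - 1) f0 :=
      ((SymC.id_rpow hs1 hp1 3 (θ₁ - 1)).mul hs1 hp1 h1F.1 (by ring)).congr hs1
        (fun x hx => (hf01 x hx).symm)
    obtain ⟨C, -, hC⟩ := e.bound hp1
    exact ⟨C, hC⟩
  have hkfun : k = fun ρ => ∫ y in (0:ℝ)..ρ, f0 y := funext hk
  have hdk : ∀ x, 0 < x → HasDerivAt k (f0 x) x := by
    rw [hkfun]; exact ftc_pos hf0C.continuousOn hf0int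
  have hkc : ∀ x, 0 < x → ContinuousOn k (Icc 0 x) := by
    rw [hkfun]; exact prim_cont hf0int
  have hk0 : k 0 = 0 := by rw [hk]; simp
  have hkpos : ∀ x, 0 < x → 0 < k x := by
    intro x hx
    rw [hk]
    exact intervalIntegral.intervalIntegral_pos_of_pos_on (hf0int x hx)
      (fun y hy => hf0pos y hy.1) hx
  have hdkpos : ∀ x, 0 < x → 0 < deriv k x := fun x hx => by
    rw [(hdk x hx).deriv]; exact hf0pos x hx
  have hk'C : ContDiffOn ℝ 3 (deriv k) (Ioi 0) := hf0C.congr (fun x hx => (hdk x hx).deriv)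
  have hkC : ContDiffOn ℝ 3 k (Ioi 0) := by
    have h4 : ContDiffOn ℝ (3+1) k (Ioi 0) :=
      (contDiffOn_succ_iff_deriv_of_isOpen (𝕜 := ℝ) (n := (3:WithTop ℕ∞)) isOpen_Ioi).2
        ⟨fun x hx => (hdk x hx).differentiableAt.differentiableWithinAt, by simp, hk'C⟩
    exact h4.of_le le_self_add
  have hkp : ∀ p : ℝ, ContDiffOn ℝ 3 (fun x => k x ^ p) (Ioi 0) := fun p =>
    hkC.rpow_const_of_ne (fun x hx => (hkpos x hx).ne')
  have hkp' : ∀ p : ℝ, ContDiffOn ℝ 3 (fun x => deriv k x ^ p) (Ioi 0) := fun p =>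
    hk'C.rpow_const_of_ne (fun x hx => (hdkpos x hx).ne')
  have ha₁fun : a₁ = fun x => Mlam * k x ^ (-lam₁) * deriv k x ^ (-(1:ℝ)/2) := funext ha₁
  have hb₁fun : b₁ = fun x => Mlam * x * k x ^ (-lam₁ - 1) * deriv k x ^ ((1:ℝ)/2) := funext hb₁
  have ha₁C : ContDiffOn ℝ 3 a₁ (Ioi 0) := by
    rw [ha₁fun]; exact (contDiffOn_const.mul (hkp _)).mul (hkp' _)
  have hb₁C : ContDiffOn ℝ 3 b₁ (Ioi 0) := by
    rw [hb₁fun]; exact ((contDiffOn_const.mul contDiffOn_id).mul (hkp _)).mul (hkp' _)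
  have hdd : ∀ f : ℝ → ℝ, ContDiffOn ℝ 3 f (Ioi 0) → ContinuousOn (deriv (deriv f)) (Ioi 0) := by
    intro f hf
    have h1 := ((contDiffOn_succ_iff_deriv_of_isOpen (𝕜 := ℝ) (n := (2:WithTop ℕ∞)) isOpen_Ioi).1
      (by norm_num; exact hf)).2.2
    have h2 := ((contDiffOn_succ_iff_deriv_of_isOpen (𝕜 := ℝ) (n := (1:WithTop ℕ∞)) isOpen_Ioi).1
      (by norm_num; exact h1)).2.2
    exact h2.continuousOn
  set F1 : ℝ → ℝ := fun s => k s ^ lam₁ * deriv k s ^ (-(1:ℝ)/2) * deriv (deriv a₁) s with hF1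
  set F2 : ℝ → ℝ := fun s => k s ^ (lam₁ + 1) * deriv k s ^ (-(1:ℝ)/2) * deriv (deriv b₁) s with hF2
  set F3 : ℝ → ℝ := fun s => s * k s ^ lam₁ * deriv k s ^ ((1:ℝ)/2) * deriv (deriv a₁) s with hF3
  have hF1c : ContinuousOn F1 (Ioi 0) :=
    (((hkp _).continuousOn).mul (hkp' _).continuousOn).mul (hdd _ ha₁C)
  have hF2c : ContinuousOn F2 (Ioi 0) :=
    (((hkp _).continuousOn).mul (hkp' _).continuousOn).mul (hdd _ hb₁C)
  have hF3c : ContinuousOn F3 (Ioi 0) :=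
    ((continuousOn_id.mul (hkp _).continuousOn).mul (hkp' _).continuousOn).mul (hdd _ ha₁C)
  -- small-density estimates
  obtain ⟨s1, s2⟩ := small_zone (k := k) (θ := θ₁) hθ1 hβ h1F (by positivity) h1l
    (fun x hx => by rw [← hf01 x hx]; exact hdk x hx.1) hk0 hkc
  have hγθ : γ₁ - 1 = 2 * θ₁ := by rw [hθ₁]; ring
  have ha₁F : FlatC (Ioo 0 r) (γ₁ - 1) a₁ := by
    refine (s2 Mlam (-lam₁) (-(1:ℝ)/2) 0 (by linarith)).congr hs1 ?_
    intro x hx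
    simp only [ha₁]; rw [Real.rpow_zero]; ring
  have hb₁F : FlatC (Ioo 0 r) (γ₁ - 1) b₁ := by
    refine (s2 Mlam (-lam₁ - 1) ((1:ℝ)/2) 1 (by linarith)).congr hs1 ?_
    intro x hx
    simp only [hb₁]; rw [Real.rpow_one]; ring
  have ha₁'' : SymC (Ioo 0 r) 1 (2 * θ₁ - 1 - 1) (deriv (deriv a₁)) := hγθ ▸ ha₁F.2.2.2
  have hb₁'' : SymC (Ioo 0 r) 1 (2 * θ₁ - 1 - 1) (deriv (deriv b₁)) := hγθ ▸ hb₁F.2.2.2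
  have hF1i : ∀ ρ : ℝ, 0 < ρ → IntervalIntegrable F1 volume 0 ρ := by
    refine integrable_zero hF1c hr0 (e := θ₁ - 1) (by linarith) ?_
    have e := (s1 lam₁ (-(1:ℝ)/2) (1 - θ₁) (by linarith)).pred.pred.mul hs1 hp1 ha₁''
      (γ := θ₁ - 1) (by ring)
    exact (e.bound hp1).imp fun C h => h.2
  have hF2i : ∀ ρ : ℝ, 0 < ρ → IntervalIntegrable F2 volume 0 ρ := by
    refine integrable_zero hF2c hr0 (e := 2 * θ₁ - 1) (by linarith) ?_
    have e := (s1 (lam₁ + 1) (-(1:ℝ)/2) 1 (by linarith)).pred.pred.mul hs1 hp1 hb₁''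
      (γ := 2 * θ₁ - 1) (by ring)
    exact (e.bound hp1).imp fun C h => h.2
  have hF3i : ∀ ρ : ℝ, 0 < ρ → IntervalIntegrable F3 volume 0 ρ := by
    refine integrable_zero hF3c hr0 (e := 2 * θ₁ - 1) (by linarith) ?_
    have e := (((SymC.id hs1 hp1 1).mul hs1 hp1
      (s1 lam₁ ((1:ℝ)/2) 0 (by linarith)).pred.pred (γ := 1) (by ring)).mul hs1 hp1 ha₁''
      (γ := 2 * θ₁ - 1) (by ring)).congr hs1 (g := F3) (fun x hx => by simp only [hF3]; ring)
    exact (e.bound hp1).imp fun C h => h.2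
  refine ⟨fun ρ hρ => ⟨hF1i ρ hρ, hF2i ρ hρ, hF3i ρ hρ⟩, ?_, ?_⟩
  · intro ρ hρ
    rw [hb₁]
    have h1 := hkpos ρ hρ
    have h2 := hdkpos ρ hρ
    positivity
  -- large zone
  obtain ⟨R, hR1, hRs, hRC⟩ : ∃ R : ℝ, 1 ≤ R ∧ ρss ≤ R ∧
      ∀ x ∈ Ioi R, Css * x ^ (-εe) ≤ 1/4 := by
    refine ⟨max 1 (max ρss ((4 * Css) ^ (1 / εe))), le_max_left _ _,
      (le_max_left _ _).trans (le_max_right _ _), ?_⟩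
    intro x hx
    have hx' : max 1 (max ρss ((4 * Css) ^ (1 / εe))) < x := hx
    have hx0 : 0 < x := lt_trans (lt_of_lt_of_le one_pos (le_max_left _ _)) hx'
    have h1 : (4 * Css) ^ (1 / εe) ≤ x :=
      ((le_max_right _ _).trans (le_max_right _ _)).trans hx'.le
    have h2 := Real.rpow_le_rpow (by positivity) h1 hεe.le
    rw [← Real.rpow_mul (by positivity), one_div_mul_cancel hεe.ne', Real.rpow_one] at h2
    rw [Real.rpow_neg hx0.le, ← div_eq_mul_inv, div_le_iff₀ (by positivity)]
    linarith
  have hs2 : IsOpen (Ioi R) := isOpen_Ioi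
  have hp2 : Ioi R ⊆ Ioi 0 := fun x hx => lt_trans (by linarith) (show R < x from hx)
  have hQ2b : ∀ x ∈ Ioi R, ∀ j : ℕ, j ≤ 4 →
      |iteratedDeriv j Q₂ x| ≤ Css * x ^ (-εe - (j : ℝ)) :=
    fun x hx => hQ₂bd x (hRs.trans (le_of_lt hx))
  have hQ2 : SymC (Ioi R) 4 (-εe) Q₂ :=
    SymC.of_iter hs2 (by exact_mod_cast hQ₂C4.mono hp2) hQ2b
  have hwk : ∀ e : ℝ, e ≤ 0 → ∀ x ∈ Ioi R, x ^ e ≤ 1 := by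
    intro e he x hx
    exact Real.rpow_le_one_of_one_le_of_nonpos (hR1.trans (le_of_lt hx)) he
  have hQ20 : SymC (Ioi R) 4 0 Q₂ := hQ2.weaken hp2 (hwk _ (by linarith))
  obtain ⟨q20, q21⟩ := Q_bounds hp2 hQ2b hRC
  obtain ⟨w2S, w2l, w2P, -⟩ := zone1 (β := 0) hs2 hp2 hκ₂ (by linarith) hQ20
    (fun x hx => hPlarge x (hRs.trans (le_of_lt hx))) q20 q21 rfl
  set w2 : ℝ → ℝ := fun x => κ₂ * (γ₂ * (1 + Q₂ x) + x * deriv Q₂ x) with hw2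
  have L := large_zone (k := k) (h := fun x => w2 x ^ ((1:ℝ)/2)) (θ := θ₂)
    (c := (κ₂ / 2) ^ ((1:ℝ)/2)) hR1 hθ2
    (w2S.rpow hs2 hp2 (c := κ₂ / 2) (by positivity) (by simpa using w2l) _ (by ring))
    (by positivity)
    (fun x hx => Real.rpow_le_rpow (by positivity) (w2l x hx) (by norm_num)) hdk
    (fun x hx => hf0w x (hp2 hx) hθ₂ hκ₂ (w2l x hx) (w2P x hx)) (hkpos R (by linarith))
  have hE : θ₂ / (2 * θ₁) = θ₂ * (lam₁ + 1/2) := by rw [hlamθ]; ring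
  have ha₁L : SymC (Ioi R) 3 (1/2 - θ₂ / (2 * θ₁)) a₁ := by
    refine ((L (-lam₁) (-(1:ℝ)/2) _ (by rw [hE]; ring)).const_mul hs2 hp2 Mlam).congr hs2 ?_
    intro x hx
    simp only [ha₁]; ring
  have hb₁L : SymC (Ioi R) 3 (1/2 - θ₂ / (2 * θ₁)) b₁ := by
    refine (((SymC.id hs2 hp2 3).mul hs2 hp2 (L (-lam₁ - 1) ((1:ℝ)/2) _ rfl)
      (by rw [hE]; ring)).const_mul hs2 hp2 Mlam).congr hs2 ?_
    intro x hx
    simp only [hb₁]; ring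
  have hF1L : SymC (Ioi R) 1 (-θ₂ - 1) F1 :=
    (L lam₁ (-(1:ℝ)/2) _ rfl).pred.pred.mul hs2 hp2 ha₁L.2.2.2.2 (by rw [hE]; ring)
  have hF2L : SymC (Ioi R) 1 (-1) F2 :=
    (L (lam₁ + 1) (-(1:ℝ)/2) _ rfl).pred.pred.mul hs2 hp2 hb₁L.2.2.2.2 (by rw [hE]; ring)
  have hF3L : SymC (Ioi R) 1 (-1) F3 :=
    (((SymC.id hs2 hp2 1).mul hs2 hp2 (L lam₁ ((1:ℝ)/2) _ rfl).pred.pred rfl).mul hs2 hp2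
      ha₁L.2.2.2.2 (γ := -1) (by rw [hE]; ring)).congr hs2 (fun x hx => by simp only [hF3]; ring)
  have I1 : SymC (Ioi R) 2 0 (fun ρ => ∫ s in (0:ℝ)..ρ, F1 s) :=
    prim_large hR1 (α := -θ₂) (by linarith) (by linarith) le_rfl (ftc_pos hF1c hF1i) hF1L
  have I2 : SymC (Ioi R) 2 θ₂ (fun ρ => ∫ s in (0:ℝ)..ρ, F2 s) :=
    prim_large hR1 (α := θ₂) hθ2.ne' le_rfl hθ2.le (ftc_pos hF2c hF2i)
      (hF2L.weaken hp2 (hwk _ (by linarith)))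
  have I3 : SymC (Ioi R) 2 θ₂ (fun ρ => ∫ s in (0:ℝ)..ρ, F3 s) :=
    prim_large hR1 (α := θ₂) hθ2.ne' le_rfl hθ2.le (ftc_pos hF3c hF3i)
      (hF3L.weaken hp2 (hwk _ (by linarith)))
  have hE2 : θ₂ * (1 + 1 / (2 * θ₁)) = θ₂ * (lam₁ + 3/2) := by rw [← hlamθ]; ring
  have hb₂L : SymC (Ioi R) 2 (1/2 - θ₂ * (1 + 1 / (2 * θ₁))) b₂ := by
    have T1 := (((SymC.id hs2 hp2 2).mul hs2 hp2 (L (-(lam₁ + 2)) ((1:ℝ)/2) _ rfl).pred rfl).mul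
      hs2 hp2 I1 (γ := 1/2 - θ₂ * (1 + 1 / (2 * θ₁))) (by rw [hE2]; ring)).const_mul hs2 hp2
      (-(4 * (lam₁ + 1))⁻¹)
    have T2 := ((L (-(lam₁ + 2)) (-(1:ℝ)/2) _ rfl).pred.mul
      hs2 hp2 I2 (γ := 1/2 - θ₂ * (1 + 1 / (2 * θ₁))) (by rw [hE2]; ring)).const_mul hs2 hp2
      (-(4 * (lam₁ + 1))⁻¹)
    have T3 := ((L (-(lam₁ + 2)) (-(1:ℝ)/2) _ rfl).pred.mul
      hs2 hp2 I3 (γ := 1/2 - θ₂ * (1 + 1 / (2 * θ₁))) (by rw [hE2]; ring)).const_mul hs2 hp2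
      ((4 * (lam₁ + 1))⁻¹)
    refine ((T1.add hs2 T2).add hs2 T3).congr hs2 ?_
    intro x hx
    simp only [hb₂]; ring
  obtain ⟨D1, hD1, hD1b⟩ := hb₁L.pred.final hR1
  obtain ⟨D2, hD2, hD2b⟩ := hb₂L.final hR1
  refine ⟨D1 + D2, by positivity, R + 1, by linarith, fun ρ hρ => ?_⟩
  have hρR : R < ρ := by linarith
  have hρ0 : 0 < ρ := by linarith
  constructor
  · refine (hD1b ρ hρR).trans ?_
    gcongr
    linarith
  · refine (hD2b ρ hρR).trans ?_
    gcongr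
    linarith
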